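/- Let G be a connected graph that is not a cycle, with m ≥ 1 edges, n vertices, h heavy edges, and ℓ leaves. If every heavy vertex of G is adjacent to at least three light vertices and ℓ + m ≥ h + n + 2, then λ(G^c) = ℓ + m − h − 2 and ρ(G^c) = ℓ + m − h − n − 1, where G^c denotes the complement of G. -/

import Mathlib

namespace PaperPC

open SimpleGraph

variable {V : Type*}

/-- The degree of a vertex, via the cardinality of its neighbor set. -/
noncomputable def ndeg (G : SimpleGraph V) (v : V) : ℕ := (G.neighborSet v).ncard

/-- A linear forest: an acyclic graph of maximum degree at most 2,
i.e. a vertex-disjoint union of paths.  A spanning linear subforest of `G`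
is exactly a path covering of `G` (isolated vertices are one-vertex paths). -/
def IsLinearForest (H : SimpleGraph V) : Prop :=
  H.IsAcyclic ∧ ∀ v, ndeg H v ≤ 2

/-- The number of paths of a path covering = number of connected components. -/
noncomputable def numPaths (H : SimpleGraph V) : ℕ := Nat.card H.ConnectedComponent

/-- The path covering number `P(G)`. -/
noncomputable def pathCoverNumber (G : SimpleGraph V) : ℕ :=
  sInf {k | ∃ H ≤ G, IsLinearForest H ∧ numPaths H = k}

/-- `H` is a minimum path covering of `G`. -/
def IsMinPathCover (G H : SimpleGraph V) : Prop :=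
  H ≤ G ∧ IsLinearForest H ∧ numPaths H = pathCoverNumber G

open scoped Classical in
/-- The path sequence of a path covering: the multiset of the numbers of vertices
of its paths (a multiset encodes the nondecreasing ordered sequence). -/
noncomputable def pathSeq [Fintype V] (H : SimpleGraph V) : Multiset ℕ :=
  (Finset.univ : Finset H.ConnectedComponent).val.map fun c => c.supp.ncard

/-- `G` admits a unique path sequence. -/
def UniquePathSequence [Fintype V] (G : SimpleGraph V) : Prop :=
  ∀ H₁ H₂ : SimpleGraph V, IsMinPathCover G H₁ → IsMinPathCover G H₂ →
    pathSeq H₁ = pathSeq H₂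

/-- Number of leaves (vertices of degree 1). -/
noncomputable def numLeaves (G : SimpleGraph V) : ℕ := {v | ndeg G v = 1}.ncard

/-- Number of heavy edges (edges both of whose endpoints have degree > 2). -/
noncomputable def numHeavyEdges (G : SimpleGraph V) : ℕ :=
  {e ∈ G.edgeSet | ∀ v ∈ e, 2 < ndeg G v}.ncard

/-- Number of edges. -/
noncomputable def numEdges (G : SimpleGraph V) : ℕ := G.edgeSet.ncard

/-- A graph is 2-sparse if no two adjacent vertices both have degree > 2. -/
def TwoSparse (G : SimpleGraph V) : Prop :=
  ∀ u v, G.Adj u v → ndeg G u ≤ 2 ∨ ndeg G v ≤ 2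

/-- `G` is a path graph. -/
def IsPathGraph (G : SimpleGraph V) : Prop := G.IsTree ∧ ∀ v, ndeg G v ≤ 2

/-- `G` is a cycle graph. -/
def IsCycleGraph (G : SimpleGraph V) : Prop := G.Connected ∧ ∀ v, ndeg G v = 2

/-- A generalized star: a tree with exactly one heavy vertex (the center) in which
all vines have the same number of vertices (equivalently, all leaves are at the same
distance from the center). -/
def IsGenStar (G : SimpleGraph V) : Prop :=
  G.IsTree ∧ ∃ c k, 2 < ndeg G c ∧ (∀ v, v ≠ c → ndeg G v ≤ 2) ∧
    ∀ v, ndeg G v = 1 → G.dist c v = k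

/-- An L(2,1)-labeling. -/
def IsL21Labeling (G : SimpleGraph V) (f : V → ℕ) : Prop :=
  (∀ u v, G.Adj u v → 2 ≤ Nat.dist (f u) (f v)) ∧
  (∀ u v, G.dist u v = 2 → 1 ≤ Nat.dist (f u) (f v))

/-- `λ(G)`: the least `k` such that `G` has an L(2,1)-labeling with labels in `{0,…,k}`. -/
noncomputable def lambdaNum (G : SimpleGraph V) : ℕ :=
  sInf {k | ∃ f : V → ℕ, IsL21Labeling G f ∧ ∀ v, f v ≤ k}

/-- A λ-labeling: an L(2,1)-labeling with maximum label `λ(G)`. -/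
def IsLambdaLabeling (G : SimpleGraph V) (f : V → ℕ) : Prop :=
  IsL21Labeling G f ∧ (∀ v, f v ≤ lambdaNum G) ∧ ∃ v, f v = lambdaNum G

/-- The set of holes of a labeling: unused labels `h` with `1 ≤ h ≤ λ(G) - 1`. -/
def labHoles (G : SimpleGraph V) (f : V → ℕ) : Set ℕ :=
  {h | 1 ≤ h ∧ h + 1 ≤ lambdaNum G ∧ ∀ v, f v ≠ h}

/-- The hole index `ρ(G)`: minimum number of holes over all λ-labelings. -/
noncomputable def holeIndex (G : SimpleGraph V) : ℕ :=
  sInf {k | ∃ f : V → ℕ, IsLambdaLabeling G f ∧ (labHoles G f).ncard = k}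

open scoped Classical in
/-- The island sequence of a labeling: the multiset of cardinalities of the maximal
intervals `[a,b]` of consecutive integers all used by the labeling. -/
noncomputable def islandSeq [Fintype V] (G : SimpleGraph V) (f : V → ℕ) : Multiset ℕ :=
  (((Finset.range (lambdaNum G + 1)) ×ˢ (Finset.range (lambdaNum G + 1))).filter
    (fun q => q.1 ≤ q.2 ∧ (∀ x ∈ Finset.Icc q.1 q.2, ∃ v, f v = x) ∧
      (q.1 = 0 ∨ ∀ v, f v ≠ q.1 - 1) ∧ ∀ v, f v ≠ q.2 + 1)).val.map
    fun q => q.2 - q.1 + 1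

/-- `G` admits (at least) two distinct island sequences. -/
def MultipleIslandSequences [Fintype V] (G : SimpleGraph V) : Prop :=
  ∃ f g : V → ℕ, IsLambdaLabeling G f ∧ IsLambdaLabeling G g ∧
    (labHoles G f).ncard = holeIndex G ∧ (labHoles G g).ncard = holeIndex G ∧
    islandSeq G f ≠ islandSeq G g

/-- A vine: a maximal path one of whose endpoints (`a`) is a leaf and all of whose
vertices are light.  Maximality: any light vertex adjacent to the other end already
lies on the path. -/
def IsVine (G : SimpleGraph V) {a b : V} (p : G.Walk a b) : Prop :=
  p.IsPath ∧ ndeg G a = 1 ∧ (∀ v ∈ p.support, ndeg G v ≤ 2) ∧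
  ∀ c, G.Adj b c → ndeg G c ≤ 2 → c ∈ p.support

/-- A vine with center `v`: the (heavy) vertex adjacent to the non-leaf end of the vine. -/
def IsVineWithCenter (G : SimpleGraph V) {a b : V} (p : G.Walk a b) (v : V) : Prop :=
  IsVine G p ∧ G.Adj b v ∧ 2 < ndeg G v

/-- The matching number of the subgraph of `G` induced by `S`. -/
noncomputable def matchingNumberOn (G : SimpleGraph V) (S : Set V) : ℕ :=
  sSup {k | ∃ M : Set (Sym2 V), M ⊆ G.edgeSet ∧ (∀ e ∈ M, ∀ v ∈ e, v ∈ S) ∧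
    (∀ e ∈ M, ∀ f ∈ M, e ≠ f → ∀ v, v ∈ e → v ∉ f) ∧ M.ncard = k}

/-- Labels used in the family `F`: `A`, or `B k` where `k` records the number of
vertices of each vine of the labeled generalized star that produced the label. -/
inductive Lab | A | B (k : ℕ)

/-- A labeled generalized star with center `c` whose vines have `k` vertices each
(equivalently, every leaf is at distance `k` from `c`); the degenerate case
`deg c = 2` is the convention regarding a path of length `2k` as a labeled
generalized star with two vines.  The neighbors of the center are labeled `B k`,
the other non-leaf vertices (and the center) are labeled `A`, leaves are unlabeled. -/
def IsLGenStar {W : Type*} (H : SimpleGraph W) (c : W) (k : ℕ)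
    (lab : W → Option Lab) : Prop :=
  H.IsTree ∧ 2 ≤ ndeg H c ∧ (∀ v, v ≠ c → ndeg H v ≤ 2) ∧
  (∀ v, ndeg H v = 1 → H.dist c v = k) ∧
  lab c = some Lab.A ∧
  (∀ v, H.Adj c v → lab v = some (Lab.B k)) ∧
  (∀ v, v ≠ c → ¬H.Adj c v → ndeg H v = 1 → lab v = none) ∧
  (∀ v, v ≠ c → ¬H.Adj c v → 2 ≤ ndeg H v → lab v = some Lab.A)

/-- A labeled path: a path with at least three vertices, non-leaf vertices labeled `A`. -/
def IsLPath {W : Type*} (H : SimpleGraph W) (lab : W → Option Lab) : Prop :=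
  H.IsTree ∧ (∀ v, ndeg H v ≤ 2) ∧ 3 ≤ Nat.card W ∧
  (∀ v, ndeg H v = 1 → lab v = none) ∧
  ∀ v, 2 ≤ ndeg H v → lab v = some Lab.A

/-- The induced subgraph of `T` on `s` is a labeled generalized star. -/
def LGenStarOn (T : SimpleGraph V) (s : Set V) (c : V) (k : ℕ)
    (lab : V → Option Lab) : Prop :=
  ∃ hc : c ∈ s, IsLGenStar (T.induce s) ⟨c, hc⟩ k fun v => lab v.1

/-- The induced subgraph of `T` on `s` is a labeled path. -/
def LPathOn (T : SimpleGraph V) (s : Set V) (lab : V → Option Lab) : Prop :=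
  IsLPath (T.induce s) fun v => lab v.1

/-- The family `F` of labeled trees, realized as induced subgraphs (on vertex sets `s`)
of an ambient graph `T`:  start from a labeled generalized star with at least three
vines or from a labeled path, and repeatedly attach, via a single new edge, a labeled
generalized star with at least three vines at a vertex labeled `A` (Type-1), a labeled
path by one of its non-leaf vertices at a vertex labeled `A` (Type-2), or a labeled
generalized star whose vines have the same number of vertices `k` as those of the star
that labeled `u` with `B k`, at a vertex `u` labeled `B k` (Type-3). -/
inductive InF (T : SimpleGraph V) : Set V → (V → Option Lab) → Prop
  | base_star (s : Set V) (c : V) (k : ℕ) (lab : V → Option Lab) :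
      LGenStarOn T s c k lab → 3 ≤ {w ∈ s | T.Adj c w}.ncard → InF T s lab
  | base_path (s : Set V) (lab : V → Option Lab) :
      LPathOn T s lab → InF T s lab
  | type1 (s : Set V) (lab : V → Option Lab) (t : Set V) (lab' : V → Option Lab)
      (u c : V) (k : ℕ) :
      InF T s lab → Disjoint s t → u ∈ s → c ∈ t → lab u = some Lab.A →
      LGenStarOn T t c k lab' → 3 ≤ {w ∈ t | T.Adj c w}.ncard →
      (∀ x ∈ s, ∀ y ∈ t, (T.Adj x y ↔ x = u ∧ y = c)) →
      (∀ x ∈ s, lab' x = lab x) →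
      InF T (s ∪ t) lab'
  | type2 (s : Set V) (lab : V → Option Lab) (t : Set V) (lab' : V → Option Lab)
      (u v : V) :
      InF T s lab → Disjoint s t → u ∈ s → v ∈ t → lab u = some Lab.A →
      LPathOn T t lab' → 2 ≤ {w ∈ t | T.Adj v w}.ncard →
      (∀ x ∈ s, ∀ y ∈ t, (T.Adj x y ↔ x = u ∧ y = v)) →
      (∀ x ∈ s, lab' x = lab x) →
      InF T (s ∪ t) lab'
  | type3 (s : Set V) (lab : V → Option Lab) (t : Set V) (lab' : V → Option Lab)
      (u c : V) (k : ℕ) :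
      InF T s lab → Disjoint s t → u ∈ s → c ∈ t → lab u = some (Lab.B k) →
      LGenStarOn T t c k lab' →
      (∀ x ∈ s, ∀ y ∈ t, (T.Adj x y ↔ x = u ∧ y = c)) →
      (∀ x ∈ s, lab' x = lab x) →
      InF T (s ∪ t) lab'

/-- `G` is obtained from the tree `T` by expanding each edge of `T` into a complete
graph of arbitrary order: there is an embedding `ι` of the vertices of `T` and an
assignment `b` of a block of vertices of `G` to each edge of `T` such that an original
vertex lies in the block of an edge iff it is an endpoint of that edge, blocks of
distinct edges meet only in original vertices, every vertex of `G` lies in some block,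
and two distinct vertices of `G` are adjacent iff they lie in a common block. -/
def IsBlockExpansion {U W : Type*} (T : SimpleGraph U) (G : SimpleGraph W) : Prop :=
  ∃ (ι : U ↪ W) (b : Sym2 U → Set W),
    (∀ (u : U), ∀ e ∈ T.edgeSet, (ι u ∈ b e ↔ u ∈ e)) ∧
    (∀ e ∈ T.edgeSet, ∀ f ∈ T.edgeSet, e ≠ f → b e ∩ b f ⊆ Set.range ι) ∧
    (∀ w : W, ∃ e ∈ T.edgeSet, w ∈ b e) ∧
    (∀ x y : W, G.Adj x y ↔ x ≠ y ∧ ∃ e ∈ T.edgeSet, x ∈ b e ∧ y ∈ b e)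
/-!
Let `L` be the set of light vertices and `e(L)` the number of edges inside `L`. The edges inside
`L` form disjoint paths, since `G` is connected and not a cycle.

*Lower bound.* In a labeling of `Gᶜ` two vertices with consecutive labels are adjacent in `G`, and
two vertices with the same label dominate `G`. As `e(L)` is small, the labels on `L` are distinct,
and each pair of consecutive labels on `L` costs an edge inside `L`; so `λ(Gᶜ) ≥ 2|L| - e(L) - 2`.

*Upper bound.* Listing the paths of a linear forest of `G` one after another, with an unused label
between two of them, gives an injective labeling of `Gᶜ` with maximum at most
`n + (number of paths) - 2`. A linear forest that contains all edges inside `L` and no heavy edge,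
and is maximal as such, gives every heavy vertex degree two. It thus has `e(L) + 2(n - |L|)` edges,
hence `2|L| - e(L) - n` paths, and the two bounds agree.

Counting the edges at light vertices in two ways shows that `2|L| - e(L) = ℓ + m - h`.
-/

/-! ### Holes and unused labels -/

lemma lambdaNum_le {Γ : SimpleGraph V} {f : V → ℕ} {k : ℕ} (hf : IsL21Labeling Γ f)
    (hk : ∀ v, f v ≤ k) : lambdaNum Γ ≤ k :=
  Nat.sInf_le ⟨f, hf, hk⟩

lemma IsL21Labeling.tsub_one {Γ : SimpleGraph V} {f : V → ℕ} (hf : IsL21Labeling Γ f)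
    (hpos : ∀ v, f v ≠ 0) : IsL21Labeling Γ fun v => f v - 1 := by
  have hdist (u v) : Nat.dist (f u - 1) (f v - 1) = Nat.dist (f u) (f v) := by
    have := hpos u
    have := hpos v
    simp only [Nat.dist]
    omega
  simpa only [IsL21Labeling, hdist] using hf

section LambdaLabeling

variable [Nonempty V] {Γ : SimpleGraph V} {f : V → ℕ}

lemma IsL21Labeling.exists_eq_lambdaNum (hf : IsL21Labeling Γ f)
    (hle : ∀ v, f v ≤ lambdaNum Γ) : ∃ v, f v = lambdaNum Γ := by
  by_contra! hne
  have hlt (v) : f v < lambdaNum Γ := lt_of_le_of_ne (hle v) (hne v)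
  have := hlt (Classical.arbitrary V)
  have := lambdaNum_le hf fun v => Nat.le_sub_one_of_lt (hlt v)
  omega

lemma IsL21Labeling.exists_eq_zero (hf : IsL21Labeling Γ f)
    (hle : ∀ v, f v ≤ lambdaNum Γ) : ∃ v, f v = 0 := by
  by_contra! hpos
  obtain ⟨v, hv⟩ :=
    (hf.tsub_one hpos).exists_eq_lambdaNum fun v => (Nat.sub_le _ _).trans (hle v)
  have := hpos v
  have := hle v
  omega

lemma IsL21Labeling.ncard_labHoles_add_ncard_range (hf : IsL21Labeling Γ f)
    (hle : ∀ v, f v ≤ lambdaNum Γ) :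
    (labHoles Γ f).ncard + (Set.range f).ncard = lambdaNum Γ + 1 := by
  have hunion : labHoles Γ f ∪ Set.range f = Set.Iic (lambdaNum Γ) := by
    ext i
    constructor
    · rintro (hi | ⟨v, rfl⟩)
      · exact (Nat.le_succ i).trans hi.2.1
      · exact hle v
    · intro hi
      refine or_iff_not_imp_right.2 fun hif => ?_
      have hne (v) : f v ≠ i := fun h => hif ⟨v, h⟩
      obtain ⟨u, hu⟩ := hf.exists_eq_zero hle
      obtain ⟨w, hw⟩ := hf.exists_eq_lambdaNum hle
      have := hne u
      have := hne w
      exact ⟨by omega, by simp only [Set.mem_Iic] at hi; omega, hne⟩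
  have hdisj : Disjoint (labHoles Γ f) (Set.range f) := by
    rw [Set.disjoint_right]
    rintro _ ⟨v, rfl⟩ hv
    exact hv.2.2 v rfl
  have hfin : (labHoles Γ f ∪ Set.range f).Finite := hunion ▸ Set.finite_Iic _
  rw [← Set.ncard_union_eq hdisj (hfin.subset Set.subset_union_left)
    (hfin.subset Set.subset_union_right), hunion, Set.ncard_eq_toFinset_card']
  simp

lemma holeIndex_add_card_of_injective [Finite V] (hf : IsL21Labeling Γ f)
    (hle : ∀ v, f v ≤ lambdaNum Γ) (hinj : f.Injective) :
    holeIndex Γ + Nat.card V = lambdaNum Γ + 1 := by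
  have hholes := hf.ncard_labHoles_add_ncard_range hle
  rw [← Nat.card_coe_set_eq (Set.range f), Nat.card_range_of_injective hinj] at hholes
  suffices holeIndex Γ = (labHoles Γ f).ncard by rw [this, hholes]
  refine IsLeast.csInf_eq ⟨⟨f, ⟨hf, hle, hf.exists_eq_lambdaNum hle⟩, rfl⟩, ?_⟩
  rintro _ ⟨g, ⟨hg, hgle, -⟩, rfl⟩
  have hgholes := hg.ncard_labHoles_add_ncard_range hgle
  have hrange : (Set.range g).ncard ≤ Nat.card V := by
    rw [← Set.image_univ, ← Set.ncard_univ]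
    exact Set.ncard_image_le
  omega

end LambdaLabeling

/-! ### Labelings from linear forests -/

section SpanningPath

variable {H : SimpleGraph V} {u v x y a : V}

lemma ncard_neighborSet_toSubgraph_eq_two_of_isPath {p : H.Walk u v} (hp : p.IsPath)
    (hx : x ∈ p.support) (hxu : x ≠ u) (hxv : x ≠ v) :
    (p.toSubgraph.neighborSet x).ncard = 2 := by
  obtain ⟨i, rfl, hi⟩ := Walk.mem_support_iff_exists_getVert.1 hx
  refine hp.ncard_neighborSet_toSubgraph_internal_eq_two ?_ (hi.lt_of_ne ?_)
  · rintro rfl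
    exact hxu p.getVert_zero
  · rintro rfl
    exact hxv p.getVert_length

variable [Finite V]

lemma subgraph_adj_of_ndeg_le_ncard {K : H.Subgraph} (hx : ndeg H x ≤ (K.neighborSet x).ncard)
    (hxy : H.Adj x y) : K.Adj x y := by
  have : K.neighborSet x = H.neighborSet x :=
    Set.eq_of_subset_of_ncard_le (K.neighborSet_subset x) hx
  exact this.superset hxy

lemma eq_or_eq_of_adj_of_notMem_support {p : H.Walk u v} (hp : p.IsPath) (hdeg : ndeg H x ≤ 2)
    (hx : x ∈ p.support) (hy : y ∉ p.support) (hxy : H.Adj x y) : x = u ∨ x = v := by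
  by_contra! hne
  have htwo := ncard_neighborSet_toSubgraph_eq_two_of_isPath hp hx hne.1 hne.2
  have hadj := subgraph_adj_of_ndeg_le_ncard (hdeg.trans htwo.ge) hxy
  exact hy (p.mem_verts_toSubgraph.1 hadj.snd_mem)

lemma exists_isPath_forall_length_le (H : SimpleGraph V) (a : V) :
    ∃ (u v : V) (p : H.Walk u v), p.IsPath ∧ H.Reachable a u ∧
      ∀ (u' v' : V) (q : H.Walk u' v'), q.IsPath → H.Reachable a u' → q.length ≤ p.length := by
  have := Fintype.ofFinite V
  let lengths : Set ℕ :=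
    {n | ∃ (u v : V) (p : H.Walk u v), p.IsPath ∧ H.Reachable a u ∧ p.length = n}
  have hbdd : BddAbove lengths := by
    refine ⟨Fintype.card V, ?_⟩
    rintro _ ⟨u, v, p, hp, -, rfl⟩
    exact hp.length_lt.le
  obtain ⟨u, v, p, hp, hau, hlen⟩ : sSup lengths ∈ lengths :=
    Nat.sSup_mem ⟨0, a, a, .nil, .nil, .rfl, rfl⟩ hbdd
  refine ⟨u, v, p, hp, hau, fun u' v' q hq hau' => ?_⟩
  exact (le_csSup hbdd ⟨u', v', q, hq, hau', rfl⟩).trans hlen.ge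

/-- A longest path works: only its ends can have neighbours outside of it, and such a neighbour
would extend it. -/
lemma exists_isPath_forall_mem_support_iff (hdeg : ∀ v, ndeg H v ≤ 2) (a : V) :
    ∃ (u v : V) (p : H.Walk u v), p.IsPath ∧ ∀ w, w ∈ p.support ↔ H.Reachable a w := by
  classical
  obtain ⟨u, v, p, hp, hau, hmax⟩ := exists_isPath_forall_length_le H a
  refine ⟨u, v, p, hp, fun w => ⟨fun hw => hau.trans (p.takeUntil w hw).reachable, fun hw => ?_⟩⟩
  by_contra hwp
  obtain ⟨q⟩ := hau.symm.trans hw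
  obtain ⟨⟨⟨x, y⟩, hxy⟩, -, hx, hy⟩ :=
    q.exists_boundary_dart {z | z ∈ p.support} p.start_mem_support hwp
  obtain rfl | rfl := eq_or_eq_of_adj_of_notMem_support hp (hdeg x) hx hy hxy
  · have := hmax _ _ (.cons hxy.symm p) (hp.cons hy) (hau.trans hxy.reachable)
    simp at this
  · have := hmax _ _ (p.concat hxy) (hp.concat hy hxy) hau
    simp at this

lemma eq_of_reachable_of_ndeg_le_one (hdeg : ∀ v, ndeg H v ≤ 2) {b c : V} (hab : H.Reachable a b)
    (hac : H.Reachable a c) (ha : ndeg H a ≤ 1) (hb : ndeg H b ≤ 1) (hc : ndeg H c ≤ 1)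
    (hne_b : a ≠ b) (hne_c : a ≠ c) : b = c := by
  obtain ⟨u, v, p, hp, hsupp⟩ := exists_isPath_forall_mem_support_iff hdeg a
  have hend (x) (hax : H.Reachable a x) (hx : ndeg H x ≤ 1) : x = u ∨ x = v := by
    by_contra! hne
    have htwo := ncard_neighborSet_toSubgraph_eq_two_of_isPath hp ((hsupp x).2 hax) hne.1 hne.2
    have := Set.ncard_le_ncard (p.toSubgraph.neighborSet_subset x)
    exact absurd (htwo.ge.trans this) (by simpa [ndeg] using hx)
  grind [hend a .rfl ha, hend b hab hb, hend c hac hc]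

end SpanningPath

lemma exists_injective_of_isChain_option {R : V → V → Prop} {L : List (Option V)}
    (hchain : L.IsChain fun x y => ∀ u ∈ x, ∀ v ∈ y, R u v) (hmem : ∀ v, some v ∈ L) :
    ∃ f : V → ℕ, f.Injective ∧ (∀ v, f v < L.length) ∧ ∀ u v, f u + 1 = f v → R u v := by
  classical
  have hlt (v) : L.idxOf (some v) < L.length := List.idxOf_lt_length_of_mem (hmem v)
  have hget (v) : L[L.idxOf (some v)]'(hlt v) = some v := List.getElem_idxOf (hlt v)
  refine ⟨fun v => L.idxOf (some v), fun u v huv => ?_, hlt, fun u v huv => ?_⟩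
  · exact Option.some_inj.1 ((List.idxOf_inj (hmem u)).1 huv)
  · have hstep := List.isChain_iff_getElem.1 hchain (L.idxOf (some u)) (huv ▸ hlt v)
    simp only [huv, hget] at hstep
    exact hstep u rfl v rfl

lemma exists_injective_of_isChain [Fintype V] {R : V → V → Prop} {P : List (List V)}
    (hchain : ∀ l ∈ P, l.IsChain R) (hnodup : P.flatten.Nodup) (hcover : ∀ v, v ∈ P.flatten) :
    ∃ f : V → ℕ, f.Injective ∧ (∀ v, f v + 2 ≤ Fintype.card V + P.length) ∧
      ∀ u v, f u + 1 = f v → R u v := by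
  -- The chains are laid out one after another; each `none` is a label left unused.
  let L : List (Option V) := (P.map fun l => none :: l.map some).flatten
  have hlen : L.length = Fintype.card V + P.length := by
    have hcard : P.flatten.length = Fintype.card V := by
      classical
      rw [← List.toFinset_card_of_nodup hnodup, ← Finset.card_univ]
      congr
      ext v
      simpa using hcover v
    rw [← hcard]
    simp [L, List.length_flatten, Function.comp_def, List.sum_map_add]
  have hL : L.IsChain fun x y => ∀ u ∈ x, ∀ v ∈ y, R u v := by
    refine (List.isChain_flatten (by simp)).2 ⟨?_, ?_⟩
    · simp only [List.mem_map]
      rintro _ ⟨l, hl, rfl⟩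
      simpa [List.isChain_cons, List.isChain_map] using hchain l hl
    · rw [List.isChain_map]
      refine List.Pairwise.isChain (List.pairwise_of_forall fun _ _ => ?_)
      simp
  have hmem (v) : some v ∈ L.tail := by
    cases P with
    | nil => simpa using hcover v
    | cons l P => simpa [L] using hcover v
  obtain ⟨f, hinj, hlt, hadj⟩ := exists_injective_of_isChain_option hL.tail hmem
  refine ⟨f, hinj, fun v => ?_, hadj⟩
  have := hlt v
  rw [List.length_tail] at this
  omega

lemma exists_injective_of_ndeg_le_two [Fintype V] {H : SimpleGraph V}
    (hdeg : ∀ v, ndeg H v ≤ 2) :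
    ∃ f : V → ℕ, f.Injective ∧ (∀ v, f v + 2 ≤ Fintype.card V + numPaths H) ∧
      ∀ u v, f u + 1 = f v → H.Adj u v := by
  have := Fintype.ofFinite H.ConnectedComponent
  have hpath (c : H.ConnectedComponent) :
      ∃ l : List V, l.IsChain H.Adj ∧ l.Nodup ∧ ∀ w, w ∈ l ↔ H.connectedComponentMk w = c := by
    induction c using ConnectedComponent.ind with
    | h a =>
      obtain ⟨u, v, p, hp, hsupp⟩ := exists_isPath_forall_mem_support_iff hdeg a
      refine ⟨p.support, p.isChain_adj_support, hp.support_nodup, fun w => ?_⟩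
      rw [hsupp, ConnectedComponent.eq, reachable_comm]
  choose path hchain hnodup hmem using hpath
  let P : List (List V) := (Finset.univ : Finset H.ConnectedComponent).toList.map path
  have hP : P.length = numPaths H := by
    simp [P, numPaths]
  rw [← hP]
  refine exists_injective_of_isChain ?_ ?_ ?_
  · simpa [P] using hchain
  · refine List.nodup_flatten.2 ⟨by simpa [P] using hnodup, ?_⟩
    rw [List.pairwise_map]
    refine (Finset.nodup_toList _).imp fun {c d} hcd w hc hd => hcd ?_
    rw [← (hmem c w).1 hc, ← (hmem d w).1 hd]
  · simp [P, hmem]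

lemma isL21Labeling_compl_of_injective {G : SimpleGraph V} {f : V → ℕ} (hf : f.Injective)
    (hadj : ∀ u v, f u + 1 = f v → G.Adj u v) : IsL21Labeling Gᶜ f := by
  refine ⟨fun u v huv => ?_, fun u v huv => ?_⟩
  · obtain ⟨hne, hnadj⟩ := (compl_adj _ _ _).1 huv
    have h_ne : f u ≠ f v := hf.ne hne
    have h_succ : f u + 1 ≠ f v := fun h => hnadj (hadj u v h)
    have h_pred : f v + 1 ≠ f u := fun h => hnadj (hadj v u h).symm
    simp only [Nat.dist]
    omega
  · refine Nat.dist_pos_of_ne (hf.ne ?_)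
    rintro rfl
    simp at huv

/-! ### Lower bounds from sparse vertex sets -/

/-- The number of edges of `H` with both ends in `S`. -/
noncomputable def numEdgesIn (H : SimpleGraph V) (S : Set V) : ℕ :=
  {e ∈ H.edgeSet | ∀ v ∈ e, v ∈ S}.ncard

lemma card_le_numEdgesIn_add_one [Finite V] {G : SimpleGraph V} {S : Finset V} {u v : V}
    (hu : u ∈ S) (hv : v ∈ S) (hne : u ≠ v) (hdom : ∀ w ∈ S, G.Adj u w ∨ G.Adj v w) :
    S.card ≤ numEdgesIn G S + 1 := by
  classical
  suffices (S.erase u).card ≤ numEdgesIn G S by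
    rw [Finset.card_erase_of_mem hu] at this
    omega
  rw [numEdgesIn, ← Set.ncard_coe_finset]
  refine Set.ncard_le_ncard_of_injOn (fun w => if G.Adj u w then s(u, w) else s(v, w)) ?_ ?_
  · intro w hw
    obtain ⟨-, hw⟩ := Finset.mem_erase.1 hw
    have := hdom w hw
    split_ifs with huw <;> simp_all
  · intro w hw w' hw'
    have hwu : w ≠ u := (Finset.mem_erase.1 hw).1
    have hwu' : w' ≠ u := (Finset.mem_erase.1 hw').1
    grind

lemma IsL21Labeling.adj_of_compl {G : SimpleGraph V} {f : V → ℕ} (hf : IsL21Labeling Gᶜ f)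
    {u v : V} (hne : u ≠ v) (h₁ : f u ≤ f v + 1) (h₂ : f v ≤ f u + 1) : G.Adj u v := by
  by_contra hadj
  have := hf.1 u v ((compl_adj _ _ _).2 ⟨hne, hadj⟩)
  simp only [Nat.dist] at this
  omega

lemma IsL21Labeling.adj_or_adj_of_compl {G : SimpleGraph V} {f : V → ℕ}
    (hf : IsL21Labeling Gᶜ f) {u v : V} (hne : u ≠ v) (huv : f u = f v) (w : V) :
    G.Adj u w ∨ G.Adj v w := by
  have hadj := hf.adj_of_compl hne (by omega) (by omega)
  by_contra! hw
  have hwu : u ≠ w := by rintro rfl; exact hw.2 hadj.symm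
  have hwv : v ≠ w := by rintro rfl; exact hw.1 hadj
  have hed : Gᶜ.edist u v = 2 := by
    rw [edist_eq_two_iff]
    refine ⟨hne, fun h => ((compl_adj _ _ _).1 h).2 hadj, w, ?_⟩
    rw [mem_commonNeighbors, compl_adj, compl_adj]
    exact ⟨⟨hwu, hw.1⟩, hwv, hw.2⟩
  have := hf.2 u v (by rw [SimpleGraph.dist, hed]; rfl)
  simp [huv] at this

lemma IsL21Labeling.injOn_of_compl [Finite V] {G : SimpleGraph V} {f : V → ℕ}
    (hf : IsL21Labeling Gᶜ f) {S : Finset V} (hS : numEdgesIn G S + 2 ≤ S.card) :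
    Set.InjOn f S := by
  intro u hu v hv huv
  by_contra hne
  have := card_le_numEdgesIn_add_one hu hv hne fun w _ => hf.adj_or_adj_of_compl hne huv w
  omega

lemma two_mul_card_le_add_card_filter_succ_mem {U : Finset ℕ} {k : ℕ} (hU : ∀ i ∈ U, i ≤ k) :
    2 * U.card ≤ k + 2 + {i ∈ U | i + 1 ∈ U}.card := by
  have hsub : U ∪ {i ∈ U | i + 1 ∉ U}.map (addRightEmbedding 1) ⊆ Finset.range (k + 2) := by
    intro i hi
    rw [Finset.mem_range]
    rcases Finset.mem_union.1 hi with hi | hi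
    · have := hU i hi
      omega
    · obtain ⟨j, hj, rfl⟩ := Finset.mem_map.1 hi
      have := hU j (Finset.mem_filter.1 hj).1
      simpa using this
  have hdisj : Disjoint U ({i ∈ U | i + 1 ∉ U}.map (addRightEmbedding 1)) := by
    rw [Finset.disjoint_right]
    rintro _ hi
    obtain ⟨j, hj, rfl⟩ := Finset.mem_map.1 hi
    exact (Finset.mem_filter.1 hj).2
  have hcard := Finset.card_le_card hsub
  rw [Finset.card_union_of_disjoint hdisj, Finset.card_map, Finset.card_range] at hcard
  have := Finset.card_filter_add_card_filter_not (s := U) (fun i => i + 1 ∈ U)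
  omega

lemma IsL21Labeling.card_filter_succ_mem_image_le [Finite V] {G : SimpleGraph V} {f : V → ℕ}
    (hf : IsL21Labeling Gᶜ f) (S : Finset V) :
    {i ∈ S.image f | i + 1 ∈ S.image f}.card ≤ numEdgesIn G S := by
  obtain rfl | ⟨v, -⟩ := S.eq_empty_or_nonempty
  · simp
  have : Nonempty V := ⟨v⟩
  have hinv (i) (hi : i ∈ S.image f) : ∃ v ∈ S, f v = i := Finset.mem_image.1 hi
  choose! g hgS hg using hinv
  rw [numEdgesIn, ← Set.ncard_coe_finset]
  have hcons (i) (hi : i ∈ ({i ∈ S.image f | i + 1 ∈ S.image f} : Finset ℕ)) :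
      i ∈ S.image f ∧ i + 1 ∈ S.image f := Finset.mem_filter.1 hi
  refine Set.ncard_le_ncard_of_injOn (fun i => s(g i, g (i + 1))) ?_ ?_
  · intro i hi
    obtain ⟨hi, hi'⟩ := hcons i hi
    have hfi := hg i hi
    have hfi' := hg (i + 1) hi'
    have hne : g i ≠ g (i + 1) := by
      intro h
      rw [h] at hfi
      omega
    have hadj : G.Adj (g i) (g (i + 1)) := hf.adj_of_compl hne (by omega) (by omega)
    exact ⟨hadj, by simpa using ⟨hgS i hi, hgS (i + 1) hi'⟩⟩
  · intro i hi j hj hij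
    have hlabels := congrArg (Sym2.map f) hij
    obtain ⟨hi, hi'⟩ := hcons i hi
    obtain ⟨hj, hj'⟩ := hcons j hj
    simp only [Sym2.map_mk, hg _ hi, hg _ hi', hg _ hj, hg _ hj'] at hlabels
    have := Sym2.eq_iff.1 hlabels
    omega

lemma IsL21Labeling.two_mul_card_le [Finite V] {G : SimpleGraph V} {f : V → ℕ}
    (hf : IsL21Labeling Gᶜ f) {S : Finset V} (hinj : Set.InjOn f S) {k : ℕ}
    (hk : ∀ v ∈ S, f v ≤ k) :
    2 * S.card ≤ k + 2 + numEdgesIn G S := by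
  classical
  rw [← Finset.card_image_of_injOn hinj]
  refine (two_mul_card_le_add_card_filter_succ_mem (k := k) ?_).trans
    (Nat.add_le_add_left (hf.card_filter_succ_mem_image_le S) _)
  simpa using hk

/-! ### Edge counts -/

lemma ndeg_eq_card_filter_mem_edgeFinset [Fintype V] [DecidableEq V] (H : SimpleGraph V)
    [DecidableRel H.Adj] (v : V) : ndeg H v = {e ∈ H.edgeFinset | v ∈ e}.card := by
  rw [← H.incidenceFinset_eq_filter, H.card_incidenceFinset_eq_degree, ndeg,
    Set.ncard_eq_toFinset_card', ← H.card_neighborFinset_eq_degree]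
  rfl

lemma numEdgesIn_eq_card_filter [Fintype V] [DecidableEq V] (H : SimpleGraph V)
    [DecidableRel H.Adj] (p : V → Prop) [DecidablePred p] :
    numEdgesIn H {v | p v} = {e ∈ H.edgeFinset | ∀ v ∈ e, p v}.card := by
  rw [numEdgesIn, ← Set.ncard_coe_finset]
  simp

lemma sum_ndeg_add_numEdgesIn_compl [Finite V] (H : SimpleGraph V) (S : Finset V) :
    ∑ v ∈ S, ndeg H v + numEdgesIn H (S : Set V)ᶜ = numEdges H + numEdgesIn H S := by
  classical
  have := Fintype.ofFinite V
  have hends (e) (he : e ∈ H.edgeFinset) :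
      {v ∈ S | v ∈ e}.card + (if ∀ v ∈ e, v ∉ S then 1 else 0)
        = 1 + (if ∀ v ∈ e, v ∈ S then 1 else 0) := by
    induction e with
    | h a b =>
      have hab : a ≠ b := (mem_edgeFinset.1 he : H.Adj a b).ne
      have hfilter : {v ∈ S | v ∈ s(a, b)} = {v ∈ ({a, b} : Finset V) | v ∈ S} := by
        ext v
        simp [and_comm]
      rw [hfilter, Finset.filter_insert, Finset.filter_singleton]
      by_cases ha : a ∈ S <;> by_cases hb : b ∈ S <;> simp [ha, hb, hab]
  have hedges : numEdges H = ∑ e ∈ H.edgeFinset, 1 := by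
    rw [← Finset.card_eq_sum_ones, numEdges, ← Set.ncard_coe_finset, coe_edgeFinset]
  have hdegrees : ∑ v ∈ S, ndeg H v = ∑ e ∈ H.edgeFinset, {v ∈ S | v ∈ e}.card := by
    simp only [ndeg_eq_card_filter_mem_edgeFinset]
    exact Finset.sum_card_bipartiteAbove_eq_sum_card_bipartiteBelow fun v e => v ∈ e
  rw [hdegrees, hedges]
  change _ + numEdgesIn H {v | v ∉ S} = _ + numEdgesIn H {v | v ∈ S}
  rw [numEdgesIn_eq_card_filter, numEdgesIn_eq_card_filter, Finset.card_filter,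
    Finset.card_filter, ← Finset.sum_add_distrib, ← Finset.sum_add_distrib]
  exact Finset.sum_congr rfl hends

/-- The light vertices of `G`, as a finset so that they can be summed over. -/
noncomputable def light [Fintype V] (G : SimpleGraph V) : Finset V := {v | ndeg G v ≤ 2}

@[simp]
lemma mem_light [Fintype V] {G : SimpleGraph V} {v : V} : v ∈ light G ↔ ndeg G v ≤ 2 := by
  simp [light]

lemma numLeaves_add_numEdges_add_numEdgesIn_light [Fintype V] {G : SimpleGraph V}
    (hpos : ∀ v, 1 ≤ ndeg G v) :
    numLeaves G + numEdges G + numEdgesIn G (light G) =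
      numHeavyEdges G + 2 * (light G).card := by
  have hleaves : numLeaves G + ∑ v ∈ light G, ndeg G v = 2 * (light G).card := by
    have : numLeaves G = ∑ v ∈ light G, if ndeg G v = 1 then 1 else 0 := by
      rw [← Finset.card_filter, numLeaves, ← Set.ncard_coe_finset]
      congr 1
      ext v
      simp only [Set.mem_ofPred_eq, Finset.coe_filter, mem_light]
      omega
    rw [this, ← Finset.sum_add_distrib, mul_comm]
    refine Finset.sum_const_nat fun v hv => ?_
    have := hpos v
    have := mem_light.1 hv
    split_ifs <;> omega
  have hheavy : numEdgesIn G (light G : Set V)ᶜ = numHeavyEdges G := by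
    simp [numEdgesIn, numHeavyEdges]
  have := sum_ndeg_add_numEdgesIn_compl G (light G)
  omega

lemma numPaths_lt_numPaths_of_le [Finite V] {H K : SimpleGraph V} (hHK : H ≤ K) {u v : V}
    (hK : K.Reachable u v) (hH : ¬ H.Reachable u v) : numPaths K < numPaths H := by
  have hsurj := ConnectedComponent.surjective_map_ofLE hHK
  refine (Nat.card_le_card_of_surjective _ hsurj).lt_of_ne fun hcard => ?_
  have hinj := ((Nat.bijective_iff_surjective_and_card _).2 ⟨hsurj, hcard.symm⟩).injective
  exact hH (ConnectedComponent.eq.1 (hinj (ConnectedComponent.eq.2 hK)))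

lemma numPaths_add_numEdges_le [Finite V] {H : SimpleGraph V} (hH : H.IsAcyclic) :
    numPaths H + numEdges H ≤ Nat.card V := by
  induction hn : numEdges H generalizing H with
  | zero =>
    exact Nat.card_le_card_of_surjective H.connectedComponentMk fun c => c.exists_rep
  | succ n ih =>
    have hne : numEdges H ≠ 0 := by omega
    obtain ⟨⟨u, v⟩, huv⟩ := Set.nonempty_of_ncard_ne_zero hne
    have hbridge : ¬ (H.deleteEdges {s(u, v)}).Reachable u v :=
      isBridge_iff.1 (isAcyclic_iff_forall_adj_isBridge.1 hH huv)
    have hlt := numPaths_lt_numPaths_of_le (H.deleteEdges_le {s(u, v)}) huv.reachable hbridge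
    have hdel : numEdges (H.deleteEdges {s(u, v)}) = n := by
      rw [numEdges, edgeSet_deleteEdges, Set.ncard_sdiff_singleton_of_mem huv, ← numEdges, hn]
      rfl
    have := ih (hH.anti (H.deleteEdges_le _)) hdel
    omega

/-! ### Light forests -/

/-- The graph of the edges of `G` joining two light vertices, kept on the whole vertex set: heavy
vertices are isolated in it. -/
def lightGraph (G : SimpleGraph V) : SimpleGraph V where
  Adj u v := G.Adj u v ∧ ndeg G u ≤ 2 ∧ ndeg G v ≤ 2
  symm := ⟨fun _ _ h => ⟨h.1.symm, h.2.2, h.2.1⟩⟩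
  loopless := ⟨fun v h => G.loopless.irrefl v h.1⟩

lemma lightGraph_le (G : SimpleGraph V) : lightGraph G ≤ G := fun _ _ h => h.1

lemma ndeg_mono [Finite V] {H K : SimpleGraph V} (h : H ≤ K) (v : V) : ndeg H v ≤ ndeg K v :=
  Set.ncard_le_ncard fun _ hw => h hw

lemma isCycleGraph_of_isCycle [Finite V] {G : SimpleGraph V} (hc : G.Connected) {u : V}
    {c : G.Walk u u} (hcycle : c.IsCycle) (hlight : ∀ w ∈ c.support, ndeg G w ≤ 2) :
    IsCycleGraph G := by
  have htwo (w) (hw : w ∈ c.support) : (c.toSubgraph.neighborSet w).ncard = 2 :=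
    hcycle.ncard_neighborSet_toSubgraph_eq_two hw
  have hsupport (w) : w ∈ c.support := by
    by_contra hw
    obtain ⟨p⟩ := hc.preconnected u w
    obtain ⟨⟨⟨x, y⟩, hxy⟩, -, hx, hy⟩ :=
      p.exists_boundary_dart {z | z ∈ c.support} c.start_mem_support hw
    have hadj := subgraph_adj_of_ndeg_le_ncard ((hlight x hx).trans (htwo x hx).ge) hxy
    exact hy (c.mem_verts_toSubgraph.1 hadj.snd_mem)
  refine ⟨hc, fun w => (hlight w (hsupport w)).antisymm ?_⟩
  exact (htwo w (hsupport w)).ge.trans (Set.ncard_le_ncard (c.toSubgraph.neighborSet_subset w))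

lemma isAcyclic_lightGraph_of_connected [Finite V] {G : SimpleGraph V} (hc : G.Connected)
    (hnc : ¬ IsCycleGraph G) : (lightGraph G).IsAcyclic := by
  intro u c hcycle
  refine hnc (isCycleGraph_of_isCycle hc (hcycle.mapLe (lightGraph_le G)) fun w hw => ?_)
  have hw : w ∈ c.support := by simpa using hw
  have htwo := hcycle.ncard_neighborSet_toSubgraph_eq_two hw
  obtain ⟨x, hx⟩ := Set.nonempty_of_ncard_ne_zero (htwo.trans_ne two_ne_zero)
  exact hx.adj_sub.2.1

section SupEdge

variable {H : SimpleGraph V} {u v x : V}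

lemma neighborSet_sup_edge_subset : (H ⊔ edge u v).neighborSet u ⊆ insert v (H.neighborSet u) := by
  intro y hy
  rcases hy with hy | hy
  · exact .inr hy
  · rw [edge_adj] at hy
    grind

lemma neighborSet_sup_edge_of_ne (hu : x ≠ u) (hv : x ≠ v) :
    (H ⊔ edge u v).neighborSet x = H.neighborSet x := by
  ext y
  simp [edge_adj, hu, hv]

variable [Finite V]

lemma ndeg_sup_edge_le : ndeg (H ⊔ edge u v) u ≤ ndeg H u + 1 :=
  (Set.ncard_le_ncard neighborSet_sup_edge_subset).trans (Set.ncard_insert_le _ _)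

lemma IsLinearForest.sup_edge (hH : IsLinearForest H) (hu : ndeg H u ≤ 1) (hv : ndeg H v ≤ 1)
    (huv : ¬ H.Reachable u v) : IsLinearForest (H ⊔ edge u v) := by
  refine ⟨hH.1.sup_edge_of_not_reachable huv, fun x => ?_⟩
  by_cases hxu : x = u
  · subst hxu
    exact ndeg_sup_edge_le.trans (by omega)
  by_cases hxv : x = v
  · subst hxv
    rw [edge_comm]
    exact ndeg_sup_edge_le.trans (by omega)
  · rw [ndeg, neighborSet_sup_edge_of_ne hxu hxv]
    exact hH.2 x

end SupEdge

/-- A linear forest in `G` that contains every edge joining two light vertices and no heavy edge. -/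
structure IsLightForest (G H : SimpleGraph V) : Prop where
  isLinearForest : IsLinearForest H
  le : H ≤ G
  lightGraph_le : lightGraph G ≤ H
  light_of_adj : ∀ ⦃u v⦄, H.Adj u v → 2 < ndeg G u → ndeg G v ≤ 2

section LightForest

variable [Finite V] {G H : SimpleGraph V}

lemma isLightForest_lightGraph (hac : (lightGraph G).IsAcyclic) :
    IsLightForest G (lightGraph G) where
  isLinearForest := by
    refine ⟨hac, fun v => ?_⟩
    by_cases hv : ndeg G v ≤ 2
    · exact (ndeg_mono (lightGraph_le G) v).trans hv
    · have : (lightGraph G).neighborSet v = ∅ :=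
        Set.eq_empty_of_forall_notMem fun w hw => hv hw.2.1
      simp [ndeg, this]
  le := lightGraph_le G
  lightGraph_le := le_rfl
  light_of_adj _ _ h _ := h.2.2

lemma ndeg_lt_of_le_of_not_adj (hle : H ≤ G) {u v : V} (hG : G.Adj u v) (hH : ¬ H.Adj u v) :
    ndeg H u < ndeg G u :=
  Set.ncard_lt_ncard ⟨fun _ hw => hle hw, fun h => hH (h hG)⟩

lemma IsLightForest.sup_edge (hH : IsLightForest G H) {v w : V}
    (hdeg_v : ndeg H v ≤ 1) (hw : ndeg G w ≤ 2) (hdeg_w : ndeg H w ≤ 1) (hvw : G.Adj v w)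
    (hreach : ¬ H.Reachable v w) : IsLightForest G (H ⊔ edge v w) where
  isLinearForest := hH.isLinearForest.sup_edge hdeg_v hdeg_w hreach
  le := sup_le hH.le (by simpa [edge_le_iff] using .inr hvw)
  lightGraph_le := hH.lightGraph_le.trans le_sup_left
  light_of_adj x y hxy hx := by
    rcases hxy with hxy | hxy
    · exact hH.light_of_adj hxy hx
    · rw [edge_adj] at hxy
      grind

/-- In a maximal light forest, a light neighbour of `v` that is not joined to `v` is an end of the
path through `v`: otherwise the missing edge could be added. -/
lemma ndeg_eq_two_of_maximal (hH : Maximal (IsLightForest G) H) {v : V}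
    (hthree : 3 ≤ {w | G.Adj v w ∧ ndeg G w ≤ 2}.ncard) :
    ndeg H v = 2 := by
  have hforest := hH.prop.isLinearForest
  refine (hforest.2 v).antisymm ?_
  by_contra! hlt
  have hdeg_v : ndeg H v ≤ 1 := by omega
  have hmissing : 1 < ({w | G.Adj v w ∧ ndeg G w ≤ 2} \ H.neighborSet v).ncard := by
    have := Set.le_ncard_sdiff (H.neighborSet v) {w | G.Adj v w ∧ ndeg G w ≤ 2}
    rw [ndeg] at hdeg_v
    omega
  have hend (w) (hw : w ∈ {w | G.Adj v w ∧ ndeg G w ≤ 2} \ H.neighborSet v) :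
      H.Reachable v w ∧ ndeg H w ≤ 1 := by
    obtain ⟨⟨hvw, hw⟩, hnadj⟩ := hw
    have hdeg_w : ndeg H w ≤ 1 := by
      have := ndeg_lt_of_le_of_not_adj hH.prop.le hvw.symm fun h => hnadj h.symm
      omega
    refine ⟨?_, hdeg_w⟩
    by_contra hreach
    exact hH.not_prop_of_gt (lt_sup_edge H _ _ hvw.ne hnadj)
      (hH.prop.sup_edge hdeg_v hw hdeg_w hvw hreach)
  obtain ⟨w₁, w₂, hw₁, hw₂, hne⟩ := (Set.one_lt_ncard_iff).1 hmissing
  exact hne (eq_of_reachable_of_ndeg_le_one hforest.2 (hend w₁ hw₁).1 (hend w₂ hw₂).1 hdeg_v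
    (hend w₁ hw₁).2 (hend w₂ hw₂).2 hw₁.1.1.ne hw₂.1.1.ne)

lemma exists_isLightForest_forall_ndeg_eq_two (hac : (lightGraph G).IsAcyclic)
    (hh : ∀ v, 2 < ndeg G v → 3 ≤ {w | G.Adj v w ∧ ndeg G w ≤ 2}.ncard) :
    ∃ H, IsLightForest G H ∧ ∀ v, 2 < ndeg G v → ndeg H v = 2 := by
  obtain ⟨H, -, hmax⟩ := Finite.exists_le_maximal (isLightForest_lightGraph hac)
  exact ⟨H, hmax.prop, fun v hv => ndeg_eq_two_of_maximal hmax (hh v hv)⟩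

end LightForest

lemma IsLightForest.numPaths_add_card_add_numEdgesIn_le [Fintype V] {G H : SimpleGraph V}
    (hH : IsLightForest G H) (hdeg : ∀ v, 2 < ndeg G v → ndeg H v = 2) :
    numPaths H + Fintype.card V + numEdgesIn G (light G) ≤ 2 * (light G).card := by
  classical
  have hheavy : numEdgesIn H (light G : Set V)ᶜ = 0 := by
    rw [numEdgesIn, Set.ncard_eq_zero, Set.eq_empty_iff_forall_notMem]
    rintro ⟨u, v⟩ ⟨huv, hmem⟩
    have hu : 2 < ndeg G u := by simpa using hmem u (Sym2.mem_mk_left u v)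
    have hv : 2 < ndeg G v := by simpa using hmem v (Sym2.mem_mk_right u v)
    exact (hH.light_of_adj huv hu).not_gt hv
  have hlight : numEdgesIn H (light G) = numEdgesIn G (light G) := by
    unfold numEdgesIn
    congr
    ext e
    induction e with
    | h u v =>
      refine and_congr_left fun hmem => ⟨fun h => hH.le h, fun h => hH.lightGraph_le ?_⟩
      simpa [lightGraph] using ⟨h, by simpa using hmem⟩
  have hsum : ∑ v ∈ (light G)ᶜ, ndeg H v = (light G)ᶜ.card * 2 :=
    Finset.sum_const_nat fun v hv => hdeg v (by simpa using hv)
  have hcount := sum_ndeg_add_numEdgesIn_compl H (light G)ᶜ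
  rw [Finset.coe_compl, compl_compl, hheavy, hlight, hsum] at hcount
  have hacyclic := numPaths_add_numEdges_le hH.isLinearForest.1
  rw [Nat.card_eq_fintype_card] at hacyclic
  have := Finset.card_compl_add_card (light G)
  omega

/-! ### The complement of a graph -/

section Complement

variable [Fintype V] {G : SimpleGraph V}

lemma exists_injective_isL21Labeling_compl (hac : (lightGraph G).IsAcyclic)
    (hh : ∀ v, 2 < ndeg G v → 3 ≤ {w | G.Adj v w ∧ ndeg G w ≤ 2}.ncard) :
    ∃ f : V → ℕ, f.Injective ∧ IsL21Labeling Gᶜ f ∧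
      ∀ v, f v + 2 + numEdgesIn G (light G) ≤ 2 * (light G).card := by
  obtain ⟨H, hH, hdeg⟩ := exists_isLightForest_forall_ndeg_eq_two hac hh
  obtain ⟨f, hinj, hle, hadj⟩ := exists_injective_of_ndeg_le_two hH.isLinearForest.2
  have hpaths := hH.numPaths_add_card_add_numEdgesIn_le hdeg
  refine ⟨f, hinj, isL21Labeling_compl_of_injective hinj fun u v h => hH.le (hadj u v h), ?_⟩
  intro v
  have := hle v
  omega

theorem lambdaNum_compl_add_numEdgesIn_light (hac : (lightGraph G).IsAcyclic)
    (hh : ∀ v, 2 < ndeg G v → 3 ≤ {w | G.Adj v w ∧ ndeg G w ≤ 2}.ncard)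
    (hge : numEdgesIn G (light G) + 2 ≤ (light G).card) :
    lambdaNum Gᶜ + 2 + numEdgesIn G (light G) = 2 * (light G).card := by
  obtain ⟨f, -, hf, hle⟩ := exists_injective_isL21Labeling_compl hac hh
  obtain ⟨k, hk⟩ : ∃ k, k + 2 + numEdgesIn G (light G) = 2 * (light G).card :=
    ⟨2 * (light G).card - 2 - numEdgesIn G (light G), by omega⟩
  have hfk (v) : f v ≤ k := by
    have := hle v
    omega
  suffices lambdaNum Gᶜ = k by rw [this, hk]
  refine IsLeast.csInf_eq ⟨⟨f, hf, hfk⟩, ?_⟩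
  rintro j ⟨g, hg, hgj⟩
  have := hg.two_mul_card_le (hg.injOn_of_compl hge) fun v _ => hgj v
  omega

theorem holeIndex_compl_add_card (hac : (lightGraph G).IsAcyclic)
    (hh : ∀ v, 2 < ndeg G v → 3 ≤ {w | G.Adj v w ∧ ndeg G w ≤ 2}.ncard)
    (hge : numEdgesIn G (light G) + 2 ≤ (light G).card) :
    holeIndex Gᶜ + Fintype.card V = lambdaNum Gᶜ + 1 := by
  obtain ⟨f, hinj, hf, hle⟩ := exists_injective_isL21Labeling_compl hac hh
  have hlambda := lambdaNum_compl_add_numEdgesIn_light hac hh hge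
  have : Nonempty V := by
    obtain ⟨v, -⟩ := Finset.card_pos.1 (show 0 < (light G).card by omega)
    exact ⟨v⟩
  rw [← Nat.card_eq_fintype_card]
  refine holeIndex_add_card_of_injective hf (fun v => ?_) hinj
  have := hle v
  omega

end Complement

lemma one_le_ndeg_of_connected [Finite V] {G : SimpleGraph V} (hc : G.Connected)
    (hm : 1 ≤ numEdges G) (v : V) : 1 ≤ ndeg G v := by
  obtain ⟨⟨a, b⟩, hab⟩ := Set.nonempty_of_ncard_ne_zero (Nat.one_le_iff_ne_zero.1 hm)
  have : Nontrivial V := ⟨a, b, Adj.ne hab⟩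
  exact (Set.ncard_pos (Set.toFinite _)).2 (hc.preconnected.exists_adj_of_nontrivial v)

theorem complement_lambda_hole_general_general [Fintype V] {G : SimpleGraph V}
    (hpos : ∀ v, 1 ≤ ndeg G v) (hac : (lightGraph G).IsAcyclic)
    (hh : ∀ v, 2 < ndeg G v → 3 ≤ {w | G.Adj v w ∧ ndeg G w ≤ 2}.ncard)
    (hge : numHeavyEdges G + (light G).card + 2 ≤ numLeaves G + numEdges G) :
    (lambdaNum Gᶜ : ℤ) = numLeaves G + numEdges G - numHeavyEdges G - 2 ∧
    (holeIndex Gᶜ : ℤ) =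
      numLeaves G + numEdges G - numHeavyEdges G - Fintype.card V - 1 := by
  have hcount := numLeaves_add_numEdges_add_numEdgesIn_light hpos
  have hge_light : numEdgesIn G (light G) + 2 ≤ (light G).card := by omega
  have hlambda := lambdaNum_compl_add_numEdgesIn_light hac hh hge_light
  have hhole := holeIndex_compl_add_card hac hh hge_light
  omega

/-- **Corollary (Statement 6).** Let `G` be a connected non-cycle graph with `m ≥ 1`
edges, `n` vertices, `h` heavy edges and `ℓ` leaves, in which every heavy vertex is
adjacent to at least three light vertices.  If moreover `ℓ + m ≥ h + n + 2`, then
`λ(Gᶜ) = ℓ + m − h − 2` and `ρ(Gᶜ) = ℓ + m − h − n − 1`. -/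
theorem complement_lambda_hole_general {V : Type*} [Fintype V] (G : SimpleGraph V)
    (hc : G.Connected) (hnc : ¬ IsCycleGraph G) (hm : 1 ≤ numEdges G)
    (hh : ∀ v, 2 < ndeg G v → 3 ≤ {w | G.Adj v w ∧ ndeg G w ≤ 2}.ncard)
    (hge : numHeavyEdges G + Fintype.card V + 2 ≤ numLeaves G + numEdges G) :
    (lambdaNum Gᶜ : ℤ) = numLeaves G + numEdges G - numHeavyEdges G - 2 ∧
    (holeIndex Gᶜ : ℤ) =
      numLeaves G + numEdges G - numHeavyEdges G - Fintype.card V - 1 :=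
  complement_lambda_hole_general_general (one_le_ndeg_of_connected hc hm)
    (isAcyclic_lightGraph_of_connected hc hnc) hh
    (hge.trans' (by gcongr; exact Finset.card_le_univ _))

end PaperPC
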